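/- Let n ≥ 2 and 1 ≤ M ≤ n−1 be integers, let φ ∈ ℝ, and let k₁, …, k_M be distinct elements of (2π/n)·{0,…,n−1}. Define the plane-wave Slater determinant state Ψ in ℂ^{2ⁿ}, indexed by subsets S ⊆ {0,…,n−1}, by Ψ(S) = n^{−M/2} det[ e^{i(k_j − φ/n) t_l} ]_{j,l=1}^{M} if S = {t₁ < t₂ < ⋯ < t_M} has size M, and Ψ(S) = 0 otherwise; Ψ is a unit vector. For 1 ≤ ℓ ≤ n/2 let A = {0, 1, …, ℓ−1}, and let ρ_A be the matrix indexed by subsets of A defined by ρ_A(S_A, S′_A) = ∑_{S_B ⊆ {ℓ,…,n−1}} Ψ(S_A ∪ S_B) conj(Ψ(S′_A ∪ S_B)). Then the second Rényi entropy satisfies S^{(2)}_A(Ψ) := −ln Tr(ρ_A²) ≥ ℓ²/n². -/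

import Mathlib

open Complex

noncomputable section

/-- The plane-wave Slater determinant state with momenta `k` and flux `φ`, as a wavefunction
on occupation configurations (subsets `S ⊆ {0,…,n−1}`):
`Ψ(S) = n^{−M/2} det[e^{i(k_j − φ/n)t_l}]` if `S = {t₁ < … < t_M}`, and `0` otherwise. -/
def slater (n M : ℕ) (k : Fin M → ℝ) (φ : ℝ) (S : Finset (Fin n)) : ℂ :=
  if h : S.card = M then
    (((n : ℝ) ^ (-(M : ℝ) / 2) : ℝ) : ℂ) *
      Matrix.det (Matrix.of fun j l : Fin M =>
        Complex.exp (Complex.I * ((k j - φ / n : ℝ) : ℂ) *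
          ((((S.orderIsoOfFin h l : Fin n) : ℕ) : ℝ) : ℂ)))
  else 0

/-- Cauchy–Binet. -/
lemma aux_cauchy_binet {n M : ℕ} (P : Matrix (Fin M) (Fin n) ℂ) (Q : Matrix (Fin n) (Fin M) ℂ) :
    (P * Q).det = ∑ S : Finset (Fin n), if h : S.card = M then
      (P.submatrix id (S.orderEmbOfFin h)).det * (Q.submatrix (S.orderEmbOfFin h) id).det else 0 := by
  have h1 : (P * Q).det =
      ∑ p : Fin M → Fin n, (∏ i, Q (p i) i) * (P.submatrix id p).det := by
    simp only [Matrix.det_apply', Matrix.mul_apply, Finset.prod_univ_sum, Finset.mul_sum,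
      Fintype.piFinset_univ]
    rw [Finset.sum_comm]
    refine Finset.sum_congr rfl fun p _ => Finset.sum_congr rfl fun σ _ => ?_
    simp only [Finset.prod_mul_distrib, Matrix.submatrix_apply, id]
    ring
  rw [h1, ← Finset.sum_fiberwise (s := Finset.univ)
    (g := fun p : Fin M → Fin n => Finset.univ.image p)]
  refine Finset.sum_congr rfl fun S _ => ?_
  split_ifs with h
  · have h2 : ∑ p : Fin M → Fin n with Finset.univ.image p = S,
        (∏ i, Q (p i) i) * (P.submatrix id p).det =
        ∑ τ : Equiv.Perm (Fin M), (∏ i, Q (S.orderEmbOfFin h (τ i)) i) *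
          (P.submatrix id (S.orderEmbOfFin h ∘ τ)).det := by
      symm
      refine Finset.sum_bij (fun τ _ => S.orderEmbOfFin h ∘ τ) ?_ ?_ ?_ ?_
      · intro τ _
        simp only [Finset.mem_filter, Finset.mem_univ, true_and]
        rw [← Finset.image_image, Finset.image_univ_equiv, Finset.image_orderEmbOfFin_univ]
      · intro τ _ τ' _ hh
        ext i
        have := congrFun hh i
        simp only [Function.comp] at this
        rw [(S.orderEmbOfFin h).injective this]
      · intro p hp
        simp only [Finset.mem_filter, Finset.mem_univ, true_and] at hp
        have hinj : Function.Injective p := by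
          have hc : (Finset.univ.image p).card = (Finset.univ : Finset (Fin M)).card := by
            rw [hp, h]; simp
          have := Finset.card_image_iff.1 hc
          rwa [Finset.coe_univ, Set.injOn_univ] at this
        have hmem : ∀ i, ∃ j, S.orderEmbOfFin h j = p i := by
          intro i
          have : p i ∈ Finset.univ.image (S.orderEmbOfFin h) := by
            rw [Finset.image_orderEmbOfFin_univ, ← hp]; simp
          exact (Finset.mem_image.1 this).imp fun _ hx => hx.2
        choose τ hτ using hmem
        have hτi : Function.Injective τ := by
          intro a b hab
          apply hinj
          rw [← hτ, ← hτ, hab]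
        refine ⟨Equiv.ofBijective τ (Finite.injective_iff_bijective.1 hτi), Finset.mem_univ _, ?_⟩
        ext i
        simp [hτ]
      · intro τ _
        rfl
    rw [h2, Matrix.det_apply' (Q.submatrix _ _), Finset.mul_sum]
    refine Finset.sum_congr rfl fun τ _ => ?_
    have h3 : (P.submatrix id (S.orderEmbOfFin h ∘ τ)) =
      (P.submatrix id (S.orderEmbOfFin h)).submatrix id τ := rfl
    rw [h3, Matrix.det_permute']
    simp only [Matrix.submatrix_apply, id]
    ring
  · refine Finset.sum_eq_zero fun p hp => ?_
    simp only [Finset.mem_filter, Finset.mem_univ, true_and] at hp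
    have : ¬ Function.Injective p := by
      intro hi
      apply h
      rw [← hp, Finset.card_image_of_injective _ hi]
      simp
    rw [Function.Injective] at this
    push Not at this
    obtain ⟨i, j, hij, hne⟩ := this
    rw [Matrix.det_zero_of_column_eq hne, mul_zero]
    intro k
    simp [hij]

lemma aux_det_bound {M : ℕ} (H : Matrix (Fin M) (Fin M) ℂ) (hH : H.IsHermitian) (q : ℝ)
    (hq : H.det = q) (T : ℝ) (hT : (H * H).trace = T) : q ^ 2 ≤ Real.exp (T - M) := by
  have h1 := hH.det_eq_prod_eigenvalues
  have hq' : q = ∏ i, hH.eigenvalues i := by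
    rw [hq] at h1
    apply Complex.ofReal_injective
    rw [h1]; push_cast; rfl
  have h2 : T = ∑ i, hH.eigenvalues i ^ 2 := by
    apply Complex.ofReal_injective
    rw [← hT]
    conv_lhs => rw [hH.spectral_theorem]
    rw [← map_mul, Unitary.conjStarAlgAut_apply, Matrix.trace_mul_cycle]
    simp [Matrix.diagonal_mul_diagonal, Matrix.trace, pow_two]
  have h3 : T - M = ∑ i, (hH.eigenvalues i ^ 2 - 1) := by
    rw [h2]; simp
  rw [h3, Real.exp_sum, hq', ← Finset.prod_pow]
  refine Finset.prod_le_prod (fun i _ => sq_nonneg _) fun i _ => ?_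
  have := Real.add_one_le_exp (hH.eigenvalues i ^ 2 - 1)
  linarith

lemma aux_final (q T V r : ℝ) (hr2 : r ≤ 1 / 2) (hr0 : 0 ≤ r) (hV : 3 / 4 * r ^ 2 ≤ V)
    (hq : q ^ 2 ≤ Real.exp (-4 * V)) (hT : T ≤ (1 + q ^ 2) / 2) (hT0 : 0 < T) :
    -Real.log T ≥ r ^ 2 := by
  set v := 3 / 4 * r ^ 2 with hv
  have h1 : q ^ 2 ≤ Real.exp (-4 * v) := hq.trans (Real.exp_le_exp.2 (by linarith))
  have h2 : (1 + Real.exp (-4 * v)) / 2 = Real.exp (-(2 * v)) * Real.cosh (2 * v) := by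
    rw [Real.cosh_eq, mul_div_assoc', mul_add, ← Real.exp_add, ← Real.exp_add]
    congr 2
    · simp
    · ring_nf
  have h3 : T ≤ Real.exp (-(r ^ 2)) := by
    calc T ≤ (1 + Real.exp (-4 * v)) / 2 := by linarith
      _ = _ := h2
      _ ≤ Real.exp (-(2 * v)) * Real.exp ((2 * v) ^ 2 / 2) := by
        gcongr
        exact Real.cosh_le_exp_half_sq _
      _ = Real.exp (-(2 * v) + (2 * v) ^ 2 / 2) := by rw [Real.exp_add]
      _ ≤ _ := by
        apply Real.exp_le_exp.2
        have : r ^ 2 ≤ 1 / 4 := by nlinarith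
        rw [hv]
        nlinarith [sq_nonneg r]
  have h4 := Real.log_le_log hT0 h3
  rw [Real.log_exp] at h4
  linarith

/-- choice of the sub-interval -/
lemma aux_choice (n ℓ : ℕ) (hn : 2 ≤ n) (hℓ : 1 ≤ ℓ) (hhalf : 2 * ℓ ≤ n) (s : ℝ) (F : ℕ → ℝ)
    (hs : 1 / (n : ℝ) ≤ s) (hs2 : s ≤ 1 / 2) (hF : ∀ L, L ≤ ℓ → L * s - (L * s) ^ 2 ≤ F L)
    (hmono : ∀ L, L ≤ ℓ → F L ≤ F ℓ) : 3 / 4 * ((ℓ : ℝ) / n) ^ 2 ≤ F ℓ := by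
  have hn0 : (0 : ℝ) < n := by positivity
  have hs0 : 0 < s := lt_of_lt_of_le (by positivity) hs
  set r := (ℓ : ℝ) / n with hr
  have hr0 : 0 ≤ r := by positivity
  have hr2 : r ≤ 1 / 2 := by
    rw [hr, div_le_iff₀ hn0]
    have : (2 * ℓ : ℝ) ≤ n := by exact_mod_cast hhalf
    linarith
  by_cases hx : ℓ * s ≤ 3 / 4
  · have h1 := hF ℓ le_rfl
    have h2 : r ≤ ℓ * s := by
      rw [hr, div_eq_mul_one_div]; gcongr
    have h3 := mul_nonneg (sub_nonneg.2 h2) (sub_nonneg.2 hx)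
    nlinarith
  · push Not at hx
    set L := ⌈1 / (4 * s)⌉₊ with hL
    have h1 : 1 / 4 ≤ L * s := by
      have := Nat.le_ceil (1 / (4 * s))
      rw [← hL, div_le_iff₀ (by positivity)] at this
      linarith
    have h2 : L * s ≤ 3 / 4 := by
      have := (Nat.ceil_lt_add_one (a := 1 / (4 * s)) (by positivity)).le
      rw [← hL] at this
      have h3 := mul_le_mul_of_nonneg_right this hs0.le
      have h4 : (1 / (4 * s) + 1) * s = 1 / 4 + s := by field_simp
      linarith
    have h3 : L ≤ ℓ := by
      by_contra hc
      push Not at hc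
      have : (ℓ : ℝ) * s ≤ L * s := by gcongr
      linarith
    have h4 := hF L h3
    have h5 := hmono L h3
    nlinarith [mul_nonneg (sub_nonneg.2 h1) (sub_nonneg.2 h2)]

def auxG (n M : ℕ) (k : Fin M → ℝ) (d : ℤ) : ℝ :=
  Complex.normSq (∑ j, Complex.exp (Complex.I * (k j : ℂ) * (d : ℂ))) / (n : ℝ) ^ 2

lemma auxG_nonneg (n M : ℕ) (k : Fin M → ℝ) (d : ℤ) : 0 ≤ auxG n M k d := by
  unfold auxG
  have := Complex.normSq_nonneg (∑ j, Complex.exp (Complex.I * (k j : ℂ) * (d : ℂ)))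
  positivity

lemma aux_conj_exp (x : ℝ) (d : ℤ) : (starRingEnd ℂ) (Complex.exp (Complex.I * (x : ℂ) * (d : ℂ))) =
    Complex.exp (-(Complex.I * (x : ℂ) * (d : ℂ))) := by
  rw [← Complex.exp_conj]
  congr 1
  simp

lemma auxG_eq (n M : ℕ) (k : Fin M → ℝ) (d : ℤ) : (auxG n M k d : ℂ) =
    (∑ j, ∑ j', Complex.exp (Complex.I * ((k j : ℂ) - k j') * (d : ℂ))) / (n : ℂ) ^ 2 := by
  unfold auxG
  push_cast
  rw [← Complex.mul_conj, map_sum, Finset.sum_mul_sum]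
  congr 1
  refine Finset.sum_congr rfl fun j _ => Finset.sum_congr rfl fun j' _ => ?_
  rw [aux_conj_exp, ← Complex.exp_add]
  congr 1
  ring

lemma auxG_neg (n M : ℕ) (k : Fin M → ℝ) (d : ℤ) : auxG n M k (-d) = auxG n M k d := by
  apply Complex.ofReal_injective
  rw [auxG_eq, auxG_eq, Finset.sum_comm]
  congr 1
  refine Finset.sum_congr rfl fun j _ => Finset.sum_congr rfl fun j' _ => ?_
  congr 1
  push_cast
  ring

lemma aux_orth (n : ℕ) (hn : 0 < n) (a : ℤ) (ha : ¬ (n : ℤ) ∣ a) :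
    ∑ y ∈ Finset.range n, Complex.exp (2 * Real.pi * Complex.I * a * y / n) = 0 := by
  have hn0 : (n : ℂ) ≠ 0 := by exact_mod_cast hn.ne'
  set z := Complex.exp (2 * Real.pi * Complex.I * a / n) with hz
  have h1 : ∀ y : ℕ, Complex.exp (2 * Real.pi * Complex.I * a * y / n) = z ^ y := by
    intro y
    rw [hz, ← Complex.exp_nat_mul]
    congr 1
    ring
  simp only [h1]
  have h2 : z ^ n = 1 := by
    rw [← h1, Complex.exp_eq_one_iff]
    refine ⟨a, ?_⟩
    field_simp
  have h3 : z ≠ 1 := by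
    intro h
    rw [hz, Complex.exp_eq_one_iff] at h
    obtain ⟨m, hm⟩ := h
    apply ha
    refine ⟨m, ?_⟩
    have hpi : (Real.pi : ℂ) ≠ 0 := by exact_mod_cast Real.pi_ne_zero
    field_simp at hm
    exact_mod_cast hm
  have h4 := geom_sum_mul z n
  rw [h2, sub_self] at h4
  exact (mul_eq_zero.1 h4).resolve_right (sub_ne_zero.2 h3)

lemma aux_orth_k (n M : ℕ) (hn : 0 < n) (k : Fin M → ℝ) (m : Fin M → ℕ) (hm : ∀ j, m j < n)
    (hk : ∀ j, k j = 2 * Real.pi * m j / n) (hinj : Function.Injective m) (x : ℤ) (j j' : Fin M) :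
    ∑ y ∈ Finset.range n, Complex.exp (Complex.I * ((k j : ℂ) - k j') * ((x - (y : ℤ) : ℤ) : ℂ)) =
      if j = j' then (n : ℂ) else 0 := by
  split_ifs with h
  · subst h
    simp
  · have h1 := aux_orth n hn ((m j' : ℤ) - m j) (by
      intro hd
      have h2 := Int.eq_zero_of_abs_lt_dvd hd (by
        rw [abs_lt]; have := hm j; have := hm j'; constructor <;> omega)
      exact h (hinj (by omega)))
    have h3 : ∀ y : ℕ, Complex.exp (Complex.I * ((k j : ℂ) - k j') * ((x - (y : ℤ) : ℤ) : ℂ)) =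
        Complex.exp (Complex.I * ((k j : ℂ) - k j') * x) *
        Complex.exp (2 * Real.pi * Complex.I * (((m j' : ℤ) - m j : ℤ) : ℂ) * y / n) := by
      intro y
      rw [← Complex.exp_add, hk, hk]
      congr 1
      push_cast
      ring
    simp only [h3]
    rw [← Finset.mul_sum, h1, mul_zero]

lemma auxG_row (n M : ℕ) (hn : 0 < n) (k : Fin M → ℝ) (m : Fin M → ℕ) (hm : ∀ j, m j < n)
    (hk : ∀ j, k j = 2 * Real.pi * m j / n) (hinj : Function.Injective m) (x : ℤ) :
    ∑ y ∈ Finset.range n, auxG n M k (x - y) = M / n := by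
  have hn0 : (n : ℂ) ≠ 0 := by exact_mod_cast hn.ne'
  apply Complex.ofReal_injective
  rw [Complex.ofReal_sum]
  simp only [auxG_eq]
  rw [← Finset.sum_div, Finset.sum_comm]
  have : ∀ j, ∑ y ∈ Finset.range n, ∑ j',
      Complex.exp (Complex.I * ((k j : ℂ) - k j') * ((x - (y : ℤ) : ℤ) : ℂ)) = n := by
    intro j
    rw [Finset.sum_comm]
    simp only [aux_orth_k n M hn k m hm hk hinj]
    simp
  simp only [this]
  simp
  field_simp

lemma auxG_le (n M : ℕ) (k : Fin M → ℝ) (d : ℤ) : auxG n M k d ≤ ((M : ℝ) / n) ^ 2 := by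
  unfold auxG
  rw [div_pow, Complex.normSq_eq_norm_sq]
  gcongr
  refine (norm_sum_le _ _).trans ?_
  have : ∀ j, ‖Complex.exp (Complex.I * (k j : ℂ) * (d : ℂ))‖ = 1 := by
    intro j
    have := Complex.norm_exp_ofReal_mul_I (k j * d)
    rw [← this]
    congr 2
    push_cast; ring
  simp [this]

lemma auxG_zero (n M : ℕ) (k : Fin M → ℝ) : auxG n M k 0 = ((M : ℝ) / n) ^ 2 := by
  unfold auxG
  simp [div_pow, Complex.normSq_eq_norm_sq]

lemma auxG_le' (n M : ℕ) (hn : 0 < n) (hM : M ≤ n) (k : Fin M → ℝ) (m : Fin M → ℕ) (hm : ∀ j, m j < n)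
    (hk : ∀ j, k j = 2 * Real.pi * m j / n) (hinj : Function.Injective m) (d : ℤ)
    (hd : ¬ (n : ℤ) ∣ d) : auxG n M k d ≤ (1 - (M : ℝ) / n) ^ 2 := by
  have hn0 : (n : ℝ) ≠ 0 := by exact_mod_cast hn.ne'
  have h0 : 1 - (M : ℝ) / n = ((n - M : ℕ) : ℝ) / n := by
    rw [Nat.cast_sub hM]; field_simp
  unfold auxG
  rw [h0, div_pow, Complex.normSq_eq_norm_sq]
  set f : ℕ → ℂ := fun y => Complex.exp (2 * Real.pi * Complex.I * d * y / n) with hf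
  have h1 : ∑ j, Complex.exp (Complex.I * (k j : ℂ) * (d : ℂ)) =
      ∑ y ∈ Finset.univ.image m, f y := by
    rw [Finset.sum_image (fun a _ b _ h => hinj h)]
    refine Finset.sum_congr rfl fun j _ => ?_
    rw [hf, hk]
    congr 1
    push_cast; ring
  have hsub : Finset.univ.image m ⊆ Finset.range n := by
    intro y hy
    obtain ⟨j, -, rfl⟩ := Finset.mem_image.1 hy
    exact Finset.mem_range.2 (hm j)
  have h2 := Finset.sum_sdiff (f := f) hsub
  rw [aux_orth n hn d hd] at h2
  have h3 : ∑ j, Complex.exp (Complex.I * (k j : ℂ) * (d : ℂ)) =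
      - ∑ y ∈ Finset.range n \ Finset.univ.image m, f y := by
    rw [h1]; linear_combination h2
  rw [h3, norm_neg]
  gcongr
  refine (norm_sum_le _ _).trans ?_
  have h4 : ∀ y, ‖f y‖ = 1 := by
    intro j
    have := Complex.norm_exp_ofReal_mul_I (2 * Real.pi * d * j / n)
    rw [← this, hf]
    congr 2
    push_cast; ring
  simp only [h4]
  rw [Finset.sum_const, Finset.card_sdiff_of_subset hsub, Finset.card_image_of_injective _ hinj]
  simp

def auxF (n M : ℕ) (k : Fin M → ℝ) (L : ℕ) : ℝ :=
  L * ((M : ℝ) / n) - ∑ x ∈ Finset.range L, ∑ y ∈ Finset.range L, auxG n M k ((x : ℤ) - y)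

lemma auxF_step (n M : ℕ) (hn : 0 < n) (k : Fin M → ℝ) (m : Fin M → ℕ) (hm : ∀ j, m j < n)
    (hk : ∀ j, k j = 2 * Real.pi * m j / n) (hinj : Function.Injective m) (L : ℕ)
    (hL : 2 * L + 1 ≤ n) : auxF n M k L ≤ auxF n M k (L + 1) := by
  have h1 := auxG_row n M hn k m hm hk hinj L
  have h2 : ∑ y ∈ Finset.range (2 * L + 1), auxG n M k ((L : ℤ) - y) ≤ M / n := by
    rw [← h1]
    exact Finset.sum_le_sum_of_subset_of_nonneg (Finset.range_mono hL)
      (fun _ _ _ => auxG_nonneg _ _ _ _)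
  set s := ∑ y ∈ Finset.range L, auxG n M k ((L : ℤ) - y) with hs
  have h3 : ∑ y ∈ Finset.range (2 * L + 1), auxG n M k ((L : ℤ) - y) = auxG n M k 0 + 2 * s := by
    have : 2 * L + 1 = (L + 1) + L := by ring
    rw [this, Finset.sum_range_add, Finset.sum_range_succ]
    have h4 : ∑ x ∈ Finset.range L, auxG n M k ((L : ℤ) - ((L + 1 + x : ℕ) : ℤ)) = s := by
      rw [hs, ← Finset.sum_range_reflect]
      refine Finset.sum_congr rfl fun x hx => ?_
      have hx' := Finset.mem_range.1 hx
      rw [← auxG_neg]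
      congr 1
      omega
    rw [h4]
    simp
    ring
  have h5 : ∑ x ∈ Finset.range L, auxG n M k ((x : ℤ) - L) = s := by
    refine Finset.sum_congr rfl fun x _ => ?_
    rw [← auxG_neg]
    congr 1
    ring
  unfold auxF
  rw [Finset.sum_range_succ]
  simp only [Finset.sum_range_succ _ L, Finset.sum_add_distrib]
  rw [h5, ← hs, sub_self]
  push_cast
  linarith

lemma auxF_mono (n M : ℕ) (hn : 0 < n) (k : Fin M → ℝ) (m : Fin M → ℕ) (hm : ∀ j, m j < n)
    (hk : ∀ j, k j = 2 * Real.pi * m j / n) (hinj : Function.Injective m) (ℓ : ℕ)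
    (hℓ : 2 * ℓ ≤ n) (L : ℕ) (hL : L ≤ ℓ) : auxF n M k L ≤ auxF n M k ℓ := by
  induction ℓ, hL using Nat.le_induction with
  | base => exact le_rfl
  | succ t ht ih =>
    exact (ih (by omega)).trans (auxF_step n M hn k m hm hk hinj t (by omega))

lemma auxF_bound1 (n M : ℕ) (k : Fin M → ℝ) (L : ℕ) :
    L * ((M : ℝ) / n) - (L * ((M : ℝ) / n)) ^ 2 ≤ auxF n M k L := by
  unfold auxF
  have : ∑ x ∈ Finset.range L, ∑ y ∈ Finset.range L, auxG n M k ((x : ℤ) - y) ≤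
      ∑ x ∈ Finset.range L, ∑ y ∈ Finset.range L, ((M : ℝ) / n) ^ 2 :=
    Finset.sum_le_sum fun x _ => Finset.sum_le_sum fun y _ => auxG_le _ _ _ _
  simp only [Finset.sum_const, Finset.card_range, nsmul_eq_mul] at this
  nlinarith

lemma auxF_bound2 (n M : ℕ) (hn : 0 < n) (hM : M ≤ n) (k : Fin M → ℝ) (m : Fin M → ℕ)
    (hm : ∀ j, m j < n) (hk : ∀ j, k j = 2 * Real.pi * m j / n) (hinj : Function.Injective m)
    (L : ℕ) (hL : L ≤ n) :
    L * (1 - (M : ℝ) / n) - (L * (1 - (M : ℝ) / n)) ^ 2 ≤ auxF n M k L := by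
  unfold auxF
  set s := (M : ℝ) / n
  have : ∑ x ∈ Finset.range L, ∑ y ∈ Finset.range L, auxG n M k ((x : ℤ) - y) ≤
      ∑ x ∈ Finset.range L, ∑ y ∈ Finset.range L,
        ((1 - s) ^ 2 + if x = y then s ^ 2 - (1 - s) ^ 2 else 0) := by
    refine Finset.sum_le_sum fun x hx => Finset.sum_le_sum fun y hy => ?_
    have hx' := Finset.mem_range.1 hx
    have hy' := Finset.mem_range.1 hy
    split_ifs with h
    · subst h
      rw [sub_self, auxG_zero]
      linarith
    · rw [add_zero]
      refine auxG_le' n M hn hM k m hm hk hinj _ fun hd => h ?_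
      have := Int.eq_zero_of_abs_lt_dvd hd (by rw [abs_lt]; constructor <;> omega)
      omega
  have h2 : ∑ x ∈ Finset.range L, ∑ y ∈ Finset.range L,
        ((1 - s) ^ 2 + if x = y then s ^ 2 - (1 - s) ^ 2 else 0) =
        L * (L * (1 - s) ^ 2) + L * (s ^ 2 - (1 - s) ^ 2) := by
    simp only [Finset.sum_add_distrib, Finset.sum_const, Finset.card_range, nsmul_eq_mul,
      Finset.sum_ite_eq]
    congr 1
    rw [Finset.sum_congr rfl (fun x hx => if_pos hx)]
    simp
    ring
  rw [h2] at this
  nlinarith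

def auxE (n M : ℕ) (k : Fin M → ℝ) (φ : ℝ) (j : Fin M) (t : Fin n) : ℂ :=
  Complex.exp (Complex.I * ((k j - φ / n : ℝ) : ℂ) * ((((t : Fin n) : ℕ) : ℝ) : ℂ))

def auxP (n M : ℕ) (k : Fin M → ℝ) (φ : ℝ) : Matrix (Fin M) (Fin n) ℂ :=
  Matrix.of fun j t => auxE n M k φ j t

def auxQ (n M : ℕ) (k : Fin M → ℝ) (φ : ℝ) (σ : Fin n → ℝ) : Matrix (Fin n) (Fin M) ℂ :=
  Matrix.of fun t j => ((σ t / n : ℝ) : ℂ) * (starRingEnd ℂ) (auxE n M k φ j t)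

lemma aux_slater_normSq (n M : ℕ) (hn : 0 < n) (k : Fin M → ℝ) (φ : ℝ) (S : Finset (Fin n))
    (h : S.card = M) : Complex.normSq (slater n M k φ S) =
    ((n : ℝ) ^ M)⁻¹ * Complex.normSq ((auxP n M k φ).submatrix id (S.orderEmbOfFin h)).det := by
  have hn0 : (0 : ℝ) < n := by exact_mod_cast hn
  rw [slater, dif_pos h, Complex.normSq_mul, Complex.normSq_ofReal]
  congr 1
  rw [← Real.rpow_add hn0, ← Real.rpow_natCast, ← Real.rpow_neg hn0.le]
  congr 1
  ring

lemma aux_gen (n M : ℕ) (hn : 0 < n) (k : Fin M → ℝ) (φ : ℝ) (σ : Fin n → ℝ) :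
    (auxP n M k φ * auxQ n M k φ σ).det =
      ((∑ S : Finset (Fin n), (∏ t ∈ S, σ t) * Complex.normSq (slater n M k φ S) : ℝ) : ℂ) := by
  rw [aux_cauchy_binet, Complex.ofReal_sum]
  refine Finset.sum_congr rfl fun S _ => ?_
  split_ifs with h
  · rw [aux_slater_normSq n M hn k φ S h]
    have h1 : ((auxQ n M k φ σ).submatrix (S.orderEmbOfFin h) id) =
        Matrix.of fun l j => ((σ (S.orderEmbOfFin h l) / n : ℝ) : ℂ) *
          (Matrix.transpose ((starRingEnd ℂ).mapMatrix
            ((auxP n M k φ).submatrix id (S.orderEmbOfFin h))) l j) := by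
      ext l j
      simp [auxQ, auxP]
    rw [h1, Matrix.det_mul_column, Matrix.det_transpose, ← RingHom.map_det]
    have h2 : ∏ t ∈ S, σ t = ∏ l, σ (S.orderEmbOfFin h l) := by
      conv_lhs => rw [← Finset.image_orderEmbOfFin_univ S h]
      rw [Finset.prod_image (fun a _ b _ hab => (S.orderEmbOfFin h).injective hab)]
    rw [h2]
    push_cast
    rw [← Complex.mul_conj, Finset.prod_div_distrib]
    simp
    ring
  · rw [slater, dif_neg h]
    simp

lemma aux_PQ_entry (n M : ℕ) (k : Fin M → ℝ) (φ : ℝ) (σ : Fin n → ℝ) (j j' : Fin M) :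
    (auxP n M k φ * auxQ n M k φ σ) j j' =
      (∑ t : Fin n, (σ t : ℂ) * Complex.exp (Complex.I * ((k j : ℂ) - k j') * ((t : ℕ) : ℂ))) / n := by
  rw [Matrix.mul_apply, Finset.sum_div]
  refine Finset.sum_congr rfl fun t _ => ?_
  simp only [auxP, auxQ, Matrix.of_apply, auxE]
  have := aux_conj_exp (k j' - φ / n) ((t : ℕ) : ℤ)
  push_cast at this ⊢
  rw [this]
  have h2 : Complex.exp (Complex.I * ((k j : ℂ) - k j') * ((t : ℕ) : ℂ)) =
    Complex.exp (Complex.I * ((k j : ℂ) - φ / n) * ((t : ℕ) : ℂ)) *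
    Complex.exp (-(Complex.I * ((k j' : ℂ) - φ / n) * ((t : ℕ) : ℂ))) := by
    rw [← Complex.exp_add]
    congr 1
    ring
  rw [h2]
  ring

lemma aux_PQ_herm (n M : ℕ) (k : Fin M → ℝ) (φ : ℝ) (σ : Fin n → ℝ) :
    (auxP n M k φ * auxQ n M k φ σ).IsHermitian := by
  ext j j'
  rw [Matrix.conjTranspose_apply, aux_PQ_entry, aux_PQ_entry]
  simp only [star_div₀, star_sum, star_mul']
  congr 1
  · refine Finset.sum_congr rfl fun t _ => ?_
    have := aux_conj_exp (k j' - k j) ((t : ℕ) : ℤ)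
    push_cast at this
    simp only [RCLike.star_def, this, Complex.conj_ofReal]
    congr 2
    ring
  · simp

lemma aux_PQ_one (n M : ℕ) (hn : 0 < n) (k : Fin M → ℝ) (φ : ℝ) (m : Fin M → ℕ)
    (hm : ∀ j, m j < n) (hk : ∀ j, k j = 2 * Real.pi * m j / n) (hinj : Function.Injective m) :
    (auxP n M k φ * auxQ n M k φ (fun _ => 1)) = 1 := by
  have hn0 : (n : ℂ) ≠ 0 := by exact_mod_cast hn.ne'
  ext j j'
  rw [aux_PQ_entry]
  have h := aux_orth_k n M hn k m hm hk hinj 0 j' j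
  rw [Finset.sum_range] at h
  have h2 : ∑ t : Fin n, (((1 : ℝ) : ℂ)) * Complex.exp (Complex.I * ((k j : ℂ) - k j') * ((t : ℕ) : ℂ)) =
      if j' = j then (n : ℂ) else 0 := by
    rw [← h]
    refine Finset.sum_congr rfl fun t _ => ?_
    rw [Complex.ofReal_one, one_mul]
    congr 1
    push_cast
    ring
  rw [h2, Matrix.one_apply]
  by_cases hj : j = j'
  · subst hj; simp [hn0]
  · rw [if_neg hj, if_neg (Ne.symm hj), zero_div]

lemma aux_PQ_trace (n M : ℕ) (k : Fin M → ℝ) (φ : ℝ) (σ : Fin n → ℝ) :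
    ((auxP n M k φ * auxQ n M k φ σ) * (auxP n M k φ * auxQ n M k φ σ)).trace =
      ((∑ t : Fin n, ∑ t' : Fin n, σ t * σ t' * auxG n M k (((t : ℕ) : ℤ) - ((t' : ℕ) : ℤ)) : ℝ) : ℂ) := by
  push_cast
  simp only [auxG_eq, Matrix.trace, Matrix.diag, Matrix.mul_apply (M := _ * _), aux_PQ_entry]
  have h1 : ∀ j j' : Fin M,
    (∑ t : Fin n, (σ t : ℂ) * Complex.exp (Complex.I * ((k j : ℂ) - k j') * ((t : ℕ) : ℂ))) / n *
    ((∑ t : Fin n, (σ t : ℂ) * Complex.exp (Complex.I * ((k j' : ℂ) - k j) * ((t : ℕ) : ℂ))) / n) =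
    ∑ t : Fin n, ∑ t' : Fin n, (σ t : ℂ) * σ t' * (Complex.exp (Complex.I * ((k j : ℂ) - k j') *
      ((((t : ℕ) : ℤ) - ((t' : ℕ) : ℤ) : ℤ) : ℂ)) / (n : ℂ) ^ 2) := by
    intro j j'
    rw [div_mul_div_comm, Finset.sum_mul_sum, Finset.sum_div]
    refine Finset.sum_congr rfl fun t _ => ?_
    rw [Finset.sum_div]
    refine Finset.sum_congr rfl fun t' _ => ?_
    have : Complex.exp (Complex.I * ((k j : ℂ) - k j') *
      ((((t : ℕ) : ℤ) - ((t' : ℕ) : ℤ) : ℤ) : ℂ)) =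
      Complex.exp (Complex.I * ((k j : ℂ) - k j') * ((t : ℕ) : ℂ)) *
      Complex.exp (Complex.I * ((k j' : ℂ) - k j) * ((t' : ℕ) : ℂ)) := by
      rw [← Complex.exp_add]
      congr 1
      push_cast
      ring
    rw [this]
    ring
  simp only [h1]
  simp only [Finset.sum_div, Finset.mul_sum]
  calc _ = ∑ j : Fin M, ∑ t : Fin n, ∑ t' : Fin n, ∑ j' : Fin M, _ := by
        refine Finset.sum_congr rfl fun j _ => ?_
        rw [Finset.sum_comm]
        refine Finset.sum_congr rfl fun t _ => ?_
        rw [Finset.sum_comm]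
    _ = _ := by
        rw [Finset.sum_comm]
        refine Finset.sum_congr rfl fun t _ => ?_
        rw [Finset.sum_comm]

lemma aux_trace_F (n M ℓ : ℕ) (hn : 0 < n) (hℓ : ℓ ≤ n) (k : Fin M → ℝ) (m : Fin M → ℕ)
    (hm : ∀ j, m j < n) (hk : ∀ j, k j = 2 * Real.pi * m j / n) (hinj : Function.Injective m) :
    ∑ t : Fin n, ∑ t' : Fin n, (if (t : ℕ) < ℓ then (-1 : ℝ) else 1) *
      (if (t' : ℕ) < ℓ then (-1 : ℝ) else 1) * auxG n M k (((t : ℕ) : ℤ) - ((t' : ℕ) : ℤ)) =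
      M - 4 * auxF n M k ℓ := by
  have hn0 : (n : ℝ) ≠ 0 := by exact_mod_cast hn.ne'
  have hrow := auxG_row n M hn k m hm hk hinj
  have hcol : ∀ y : ℤ, ∑ x ∈ Finset.range n, auxG n M k (x - y) = M / n := by
    intro y
    rw [← hrow y]
    refine Finset.sum_congr rfl fun x _ => ?_
    rw [← auxG_neg]
    congr 1
    ring
  have h0 : ∀ g : ℕ → ℝ, ∑ t ∈ Finset.range n, (if t < ℓ then g t else 0) =
      ∑ t ∈ Finset.range ℓ, g t := by
    intro g
    rw [← Finset.sum_filter]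
    refine Finset.sum_congr ?_ fun _ _ => rfl
    ext t
    simp only [Finset.mem_filter, Finset.mem_range]
    omega
  have h1 : ∑ t : Fin n, ∑ t' : Fin n, (if (t : ℕ) < ℓ then (-1 : ℝ) else 1) *
      (if (t' : ℕ) < ℓ then (-1 : ℝ) else 1) * auxG n M k (((t : ℕ) : ℤ) - ((t' : ℕ) : ℤ)) =
      ∑ t ∈ Finset.range n, ∑ t' ∈ Finset.range n, (if t < ℓ then (-1 : ℝ) else 1) *
      (if t' < ℓ then (-1 : ℝ) else 1) * auxG n M k ((t : ℤ) - (t' : ℤ)) := by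
    rw [Finset.sum_range]
    refine Finset.sum_congr rfl fun t _ => ?_
    rw [Finset.sum_range]
  rw [h1]
  have h2 : ∀ t t' : ℕ, (if t < ℓ then (-1 : ℝ) else 1) *
      (if t' < ℓ then (-1 : ℝ) else 1) * auxG n M k ((t : ℤ) - (t' : ℤ)) =
      auxG n M k ((t : ℤ) - (t' : ℤ)) - 2 * (if t < ℓ then auxG n M k ((t : ℤ) - (t' : ℤ)) else 0)
      - 2 * (if t' < ℓ then auxG n M k ((t : ℤ) - (t' : ℤ)) else 0)
      + 4 * (if t < ℓ then (if t' < ℓ then auxG n M k ((t : ℤ) - (t' : ℤ)) else 0) else 0) := by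
    intro t t'
    split_ifs <;> ring
  simp only [h2, Finset.sum_add_distrib, Finset.sum_sub_distrib, ← Finset.mul_sum]
  have e1 : ∑ t ∈ Finset.range n, ∑ t' ∈ Finset.range n, auxG n M k ((t : ℤ) - (t' : ℤ)) = M := by
    simp only [hrow]
    simp
    field_simp
  have e2 : ∑ t ∈ Finset.range n, ∑ t' ∈ Finset.range n,
      (if t < ℓ then auxG n M k ((t : ℤ) - (t' : ℤ)) else 0) = ℓ * (M / n) := by
    rw [Finset.sum_comm]
    simp only [h0]
    rw [Finset.sum_comm]
    simp only [hrow]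
    simp
  have e3 : ∑ t ∈ Finset.range n, ∑ t' ∈ Finset.range n,
      (if t' < ℓ then auxG n M k ((t : ℤ) - (t' : ℤ)) else 0) = ℓ * (M / n) := by
    simp only [h0]
    rw [Finset.sum_comm]
    simp only [hcol]
    simp
  have e4 : ∑ t ∈ Finset.range n, ∑ t' ∈ Finset.range n,
      (if t < ℓ then (if t' < ℓ then auxG n M k ((t : ℤ) - (t' : ℤ)) else 0) else 0) =
      ∑ t ∈ Finset.range ℓ, ∑ t' ∈ Finset.range ℓ, auxG n M k ((t : ℤ) - (t' : ℤ)) := by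
    rw [Finset.sum_comm]
    simp only [h0]
    rw [Finset.sum_comm]
    simp only [h0]
  rw [e1, e2, e3, e4, auxF]
  ring

lemma aux_sum_split {n : ℕ} (A : Finset (Fin n)) (f : Finset (Fin n) → ℝ) :
    ∑ SA ∈ A.powerset, ∑ SB ∈ Aᶜ.powerset, f (SA ∪ SB) = ∑ S : Finset (Fin n), f S := by
  rw [← Finset.sum_product']
  refine Finset.sum_bij' (fun p _ => p.1 ∪ p.2) (fun S _ => (S ∩ A, S \ A)) ?_ ?_ ?_ ?_ ?_
  · intro p _; exact Finset.mem_univ _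
  · intro S _
    simp only [Finset.mem_product, Finset.mem_powerset]
    refine ⟨Finset.inter_subset_right, ?_⟩
    intro x hx
    simp at hx ⊢
    exact hx.2
  · rintro ⟨a, b⟩ hp
    simp only [Finset.mem_product, Finset.mem_powerset] at hp
    obtain ⟨ha, hb⟩ := hp
    ext x
    · have h1 := @ha x
      have h2 := @hb x
      simp only [Finset.mem_compl] at h2
      simp
      tauto
    · have h1 := @ha x
      have h2 := @hb x
      simp only [Finset.mem_compl] at h2
      simp
      tauto
  · intro S _
    ext x
    simp
    tauto
  · intro p _; rfl

/-- The second Rényi entropy of a plane-wave Slater determinant state on the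
interval `A = {0,…,ℓ−1}` (with `1 ≤ ℓ ≤ n/2` and `1 ≤ M ≤ n−1` fermions) is at least `ℓ²/n²`.
Here `Tr(ρ_A²) = ∑_{S_A,S_A'} |ρ_A(S_A,S_A')|²` since `ρ_A` is Hermitian. -/
theorem slater_renyi_entropy_bound
    (n M ℓ : ℕ) (hn : 2 ≤ n) (hM : 1 ≤ M) (hMn : M ≤ n - 1)
    (hℓ : 1 ≤ ℓ) (hhalf : 2 * ℓ ≤ n)
    (φ : ℝ) (k : Fin M → ℝ) (hkinj : Function.Injective k)
    (hk : ∀ j, ∃ m : ℕ, m < n ∧ k j = 2 * Real.pi * m / n)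
    (A : Finset (Fin n)) (hA : A = Finset.univ.filter fun i : Fin n => (i : ℕ) < ℓ)
    (ρ : Finset (Fin n) → Finset (Fin n) → ℂ)
    (hρ : ∀ SA SA', ρ SA SA' = ∑ SB ∈ Aᶜ.powerset,
      slater n M k φ (SA ∪ SB) * (starRingEnd ℂ) (slater n M k φ (SA' ∪ SB))) :
    -Real.log (∑ SA ∈ A.powerset, ∑ SA' ∈ A.powerset, Complex.normSq (ρ SA SA')) ≥
      (ℓ : ℝ) ^ 2 / (n : ℝ) ^ 2 := by

  have hn0 : 0 < n := by omega
  choose m hm hkm using hk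
  have hinj : Function.Injective m := by
    intro a b hab
    apply hkinj
    rw [hkm, hkm, hab]
  set σ : Fin n → ℝ := fun t => if (t : ℕ) < ℓ then (-1 : ℝ) else 1 with hσ
  set q : ℝ := ∑ S : Finset (Fin n), (∏ t ∈ S, σ t) * Complex.normSq (slater n M k φ S) with hq
  have hdet := aux_gen n M hn0 k φ σ
  rw [← hq] at hdet
  have htr := aux_PQ_trace n M k φ σ
  have hqb := aux_det_bound _ (aux_PQ_herm n M k φ σ) q hdet _ htr
  rw [hσ, aux_trace_F n M ℓ hn0 (by omega) k m hm hkm hinj] at hqb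
  have hone : ∑ S : Finset (Fin n), Complex.normSq (slater n M k φ S) = 1 := by
    have h := aux_gen n M hn0 k φ (fun _ => 1)
    rw [aux_PQ_one n M hn0 k φ m hm hkm hinj, Matrix.det_one] at h
    simp only [Finset.prod_const_one, one_mul] at h
    exact_mod_cast h.symm
  -- lower bound on the variance
  have hV : 3 / 4 * ((ℓ : ℝ) / n) ^ 2 ≤ auxF n M k ℓ := by
    have hnR : (0 : ℝ) < n := by exact_mod_cast hn0
    have hmono := auxF_mono n M hn0 k m hm hkm hinj ℓ hhalf
    by_cases hc : (M : ℝ) / n ≤ 1 / 2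
    · refine aux_choice n ℓ hn hℓ hhalf _ _ ?_ hc (fun L _ => auxF_bound1 n M k L) hmono
      have : (1 : ℝ) ≤ M := by exact_mod_cast hM
      gcongr
    · refine aux_choice n ℓ hn hℓ hhalf (1 - (M : ℝ) / n) _ ?_ (by linarith)
        (fun L hL => auxF_bound2 n M hn0 (by omega) k m hm hkm hinj L (by omega)) hmono
      have : (M : ℝ) + 1 ≤ n := by exact_mod_cast (by omega : M + 1 ≤ n)
      rw [div_le_iff₀ hnR, sub_mul, div_mul_cancel₀ _ hnR.ne']
      linarith
  -- diagonal weights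
  set d : Finset (Fin n) → ℝ := fun SA => ∑ SB ∈ Aᶜ.powerset,
    Complex.normSq (slater n M k φ (SA ∪ SB)) with hd
  have hd1 : ∑ SA ∈ A.powerset, d SA = 1 := by
    rw [← hone]
    exact aux_sum_split A fun S => Complex.normSq (slater n M k φ S)
  have hdq : ∑ SA ∈ A.powerset, (-1 : ℝ) ^ SA.card * d SA = q := by
    rw [hq, ← aux_sum_split A]
    refine Finset.sum_congr rfl fun SA hSA => ?_
    rw [hd, Finset.mul_sum]
    refine Finset.sum_congr rfl fun SB hSB => ?_
    congr 1
    rw [Finset.mem_powerset] at hSA hSB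
    rw [Finset.prod_union (Finset.disjoint_of_subset_left hSA
      (Finset.disjoint_of_subset_right hSB disjoint_compl_right))]
    have e1 : ∏ t ∈ SA, σ t = (-1) ^ SA.card := by
      rw [← Finset.prod_const]
      refine Finset.prod_congr rfl fun t ht => ?_
      have := hSA ht
      rw [hA, Finset.mem_filter] at this
      simp [hσ, this.2]
    have e2 : ∏ t ∈ SB, σ t = 1 := by
      refine Finset.prod_eq_one fun t ht => ?_
      have := hSB ht
      rw [hA, Finset.mem_compl, Finset.mem_filter] at this
      simp only [Finset.mem_univ, true_and] at this
      simp [hσ, this]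
    rw [e1, e2, mul_one]
  have hd0 : ∀ SA, 0 ≤ d SA := fun SA => Finset.sum_nonneg fun _ _ => Complex.normSq_nonneg _
  have hdiag : ∀ SA, ρ SA SA = (d SA : ℂ) := by
    intro SA
    rw [hρ, hd]
    push_cast
    exact Finset.sum_congr rfl fun SB _ => Complex.mul_conj _
  have hcs : ∀ SA SA', Complex.normSq (ρ SA SA') ≤ d SA * d SA' := by
    intro SA SA'
    rw [hρ, Complex.normSq_eq_norm_sq]
    have h1 := norm_sum_le (Aᶜ.powerset) fun SB =>
      slater n M k φ (SA ∪ SB) * (starRingEnd ℂ) (slater n M k φ (SA' ∪ SB))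
    have h2 := Finset.sum_mul_sq_le_sq_mul_sq (Aᶜ.powerset)
      (fun SB => ‖slater n M k φ (SA ∪ SB)‖) (fun SB => ‖slater n M k φ (SA' ∪ SB)‖)
    simp only [norm_mul, RCLike.norm_conj] at h1
    simp only [hd, Complex.normSq_eq_norm_sq]
    refine le_trans ?_ h2
    gcongr
  have hzero : ∀ SA ∈ A.powerset, ∀ SA' ∈ A.powerset, SA.card ≠ SA'.card → ρ SA SA' = 0 := by
    intro SA hSA SA' hSA' hne
    rw [hρ]
    refine Finset.sum_eq_zero fun SB hSB => ?_
    rw [Finset.mem_powerset] at hSA hSA' hSB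
    have c1 := Finset.card_union_of_disjoint (Finset.disjoint_of_subset_left hSA
      (Finset.disjoint_of_subset_right hSB disjoint_compl_right))
    have c2 := Finset.card_union_of_disjoint (Finset.disjoint_of_subset_left hSA'
      (Finset.disjoint_of_subset_right hSB disjoint_compl_right))
    by_cases h1 : (SA ∪ SB).card = M
    · have h2 : (SA' ∪ SB).card ≠ M := by omega
      rw [slater, slater, dif_neg h2]
      simp
    · rw [slater, dif_neg h1]
      simp
  have hT : ∑ SA ∈ A.powerset, ∑ SA' ∈ A.powerset, Complex.normSq (ρ SA SA') ≤ (1 + q ^ 2) / 2 := by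
    have e : (1 + q ^ 2) / 2 = ∑ SA ∈ A.powerset, ∑ SA' ∈ A.powerset,
        (d SA * d SA' + ((-1 : ℝ) ^ SA.card * d SA) * ((-1 : ℝ) ^ SA'.card * d SA')) / 2 := by
      simp only [← Finset.sum_div, Finset.sum_add_distrib, ← Finset.mul_sum, ← Finset.sum_mul]
      rw [hd1, hdq]
      ring
    rw [e]
    refine Finset.sum_le_sum fun SA hSA => Finset.sum_le_sum fun SA' hSA' => ?_
    have hp := mul_nonneg (hd0 SA) (hd0 SA')
    by_cases hc : SA.card = SA'.card
    · refine (hcs SA SA').trans (le_of_eq ?_)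
      rw [hc]
      have : ((-1 : ℝ) ^ SA'.card) * ((-1 : ℝ) ^ SA'.card) = 1 := by
        rw [← mul_pow]; simp
      linear_combination (-(d SA * d SA') / 2) * this
    · rw [hzero SA hSA SA' hSA' hc, Complex.normSq_zero]
      rcases neg_one_pow_eq_or ℝ SA.card with h | h <;>
      rcases neg_one_pow_eq_or ℝ SA'.card with h' | h' <;> rw [h, h'] <;> nlinarith
  have hTpos : 0 < ∑ SA ∈ A.powerset, ∑ SA' ∈ A.powerset, Complex.normSq (ρ SA SA') := by
    obtain ⟨SA, hSA, hne⟩ : ∃ SA ∈ A.powerset, d SA ≠ 0 := by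
      by_contra hc
      push Not at hc
      rw [Finset.sum_eq_zero hc] at hd1
      exact zero_ne_one hd1
    refine Finset.sum_pos' (fun _ _ => Finset.sum_nonneg fun _ _ => Complex.normSq_nonneg _)
      ⟨SA, hSA, Finset.sum_pos' (fun _ _ => Complex.normSq_nonneg _) ⟨SA, hSA, ?_⟩⟩
    rw [hdiag, Complex.normSq_pos]
    exact_mod_cast hne
  have hr2 : (ℓ : ℝ) / n ≤ 1 / 2 := by
    have hnR : (0 : ℝ) < n := by exact_mod_cast hn0
    rw [div_le_iff₀ hnR]
    have : (2 * ℓ : ℝ) ≤ n := by exact_mod_cast hhalf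
    linarith
  have := aux_final q _ _ _ hr2 (by positivity) hV (hqb.trans (le_of_eq (by ring_nf))) hT hTpos
  rwa [div_pow] at this
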